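/- Characterization of symmetric quotient sequences (Perron): let n and a be relatively prime integers with 0 < a < n. Then there exist a positive integer s and positive integers q_1, …, q_s such that the symmetric Euclidean scheme associated to (q_1, …, q_s) has first remainder r_1 = n and second remainder r_2 = a, if and only if a² ≡ −1 (mod n). -/

import Mathlib

/-- Auxiliary for continuants: `contAux u i n` is the continuant `𝔠_{i, i+n-1}` of the
sequence `u`, computed via the recurrence `𝔠_{i,j} = u j * 𝔠_{i,j-1} + 𝔠_{i,j-2}`. -/
def contAux (u : ℤ → ℤ) (i : ℤ) : ℕ → ℤ
  | 0 => 1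
  | 1 => u i
  | n + 2 => u (i + n + 1) * contAux u i (n + 1) + contAux u i n

/-- `cont u i j` is the continuant `𝔠_{i,j}` of the sequence `u`, with the boundary
conventions `𝔠_{j+1,j} = 1` and `𝔠_{i,j} = 0` for `i > j + 1` (in particular
`𝔠_{j+2,j} = 0`), and the recurrence `𝔠_{i,j} = u j * 𝔠_{i,j-1} + 𝔠_{i,j-2}`. -/
def cont (u : ℤ → ℤ) (i j : ℤ) : ℤ :=
  if j + 1 < i then 0 else contAux u i (j + 1 - i).toNat

/-- The symmetric doubling of `(q_1, …, q_s)`: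
`(Q_1, …, Q_{2s}) = (q_1, …, q_s, q_s, …, q_1)`. -/
def symQuot (q : ℤ → ℤ) (s : ℕ) (k : ℤ) : ℤ :=
  if k ≤ (s : ℤ) then q k else q (2 * (s : ℤ) + 1 - k)

/-- Auxiliary: `symAux q s m` is the remainder `r_{2s+2-m}` of the symmetric
Euclidean scheme attached to `(q_1, …, q_s)`. -/
def symAux (q : ℤ → ℤ) (s : ℕ) : ℕ → ℤ
  | 0 => 0
  | 1 => 1
  | m + 2 => symQuot q s (2 * (s : ℤ) - (m : ℤ)) * symAux q s (m + 1) + symAux q s m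

/-- `symRem q s k` is the remainder `r_k` of the symmetric Euclidean scheme attached to
`(q_1, …, q_s)`: with `(Q_1, …, Q_{2s}) = (q_1, …, q_s, q_s, …, q_1)`, one has
`r_{2s+2} = 0`, `r_{2s+1} = 1`, and `r_k = Q_k * r_{k+1} + r_{k+2}` for `1 ≤ k ≤ 2s`. -/
def symRem (q : ℤ → ℤ) (s : ℕ) (k : ℤ) : ℤ :=
  symAux q s (2 * (s : ℤ) + 2 - k).toNat

/-!
Write `M x = !![x, 1; 1, 0]`, a symmetric matrix of determinant `-1`. A division step
`u = x * v + w` reads `(u, v) = M x (v, w)`, so for the quotients `q₁, …, q_s, q_s, …, q₁` the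
vector `(n, a)` is the first column of `P * Pᵀ`, where `P = M q₁ ⋯ M q_s`. This matrix is symmetric
of determinant `1`, and expanding the determinant gives `n * m - a ^ 2 = 1`.

Conversely, let `n * m = a ^ 2 + 1`. Dividing `a` by `m`, with quotient `c`, amounts to writing
`!![n, a; a, m] = M c * !![m, r; r, t] * (M c)ᵀ` with `0 ≤ r < m`. Descent on `n` ends at the
identity matrix and so factors `!![n, a; a, m]` as `P * Pᵀ` with positive quotients.
-/

open scoped Matrix

section QuotientProduct

variable {R : Type*} [CommRing R]

/-- The matrix of one division step: it sends `(v, w)` to `(x * v + w, v)`. -/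
def quotientMatrix (x : R) : Matrix (Fin 2) (Fin 2) R := !![x, 1; 1, 0]

/-- The matrix of a run of division steps with quotients `l`, outermost step first. Its entries are
the continuants of `l` and of `l` with its first term, its last term or both removed. -/
def quotientProduct (l : List R) : Matrix (Fin 2) (Fin 2) R := (l.map quotientMatrix).prod

theorem quotientMatrix_mulVec (x y z : R) : quotientMatrix x *ᵥ ![y, z] = ![x * y + z, y] := by
  ext i
  fin_cases i <;> simp [quotientMatrix, Matrix.mulVec, dotProduct]

theorem quotientMatrix_transpose (x : R) : (quotientMatrix x)ᵀ = quotientMatrix x := by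
  ext i j
  fin_cases i <;> fin_cases j <;> rfl

theorem det_quotientMatrix (x : R) : (quotientMatrix x).det = -1 := by
  simp [quotientMatrix, Matrix.det_fin_two_of]

theorem quotientProduct_nil : quotientProduct ([] : List R) = 1 := rfl

theorem quotientProduct_cons (x : R) (l : List R) :
    quotientProduct (x :: l) = quotientMatrix x * quotientProduct l := by
  simp [quotientProduct]

theorem quotientProduct_concat (l : List R) (x : R) :
    quotientProduct (l ++ [x]) = quotientProduct l * quotientMatrix x := by
  simp [quotientProduct]

theorem det_quotientProduct (l : List R) : (quotientProduct l).det = (-1) ^ l.length := by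
  induction l with
  | nil => simp [quotientProduct_nil]
  | cons x l ih =>
    rw [quotientProduct_cons, Matrix.det_mul, det_quotientMatrix, ih, List.length_cons, pow_succ']

theorem det_quotientProduct_mul_transpose (l : List R) :
    (quotientProduct l * (quotientProduct l)ᵀ).det = 1 := by
  rw [Matrix.det_mul, Matrix.det_transpose, det_quotientProduct, ← mul_pow, neg_one_mul, neg_neg,
    one_pow]

theorem quotientProduct_cons_mul_transpose (x : R) (l : List R) :
    quotientProduct (x :: l) * (quotientProduct (x :: l))ᵀ =
      quotientMatrix x * (quotientProduct l * (quotientProduct l)ᵀ) * (quotientMatrix x)ᵀ := by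
  simp only [quotientProduct_cons, Matrix.transpose_mul, Matrix.mul_assoc]

theorem quotientMatrix_mul_mul_transpose (x u v w : R) :
    quotientMatrix x * !![u, v; v, w] * (quotientMatrix x)ᵀ =
      !![x ^ 2 * u + 2 * x * v + w, x * u + v; x * u + v, u] := by
  rw [quotientMatrix_transpose, quotientMatrix, Matrix.mul_fin_two, Matrix.mul_fin_two]
  ext i j
  fin_cases i <;> fin_cases j <;> simp <;> ring

end QuotientProduct

section SymmetricScheme

variable (q : ℤ → ℤ) (s : ℕ)

theorem symQuot_of_le {k : ℤ} (hk : k ≤ s) : symQuot q s k = q k := if_pos hk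

theorem symQuot_reflect {k : ℤ} (hk : k ≤ s) : symQuot q s (2 * s + 1 - k) = q k := by
  rw [symQuot, if_neg (by lia), sub_sub_cancel]

theorem symRem_eq_symQuot_mul_add {k : ℤ} (hk : k ≤ 2 * s) :
    symRem q s k = symQuot q s k * symRem q s (k + 1) + symRem q s (k + 2) := by
  obtain ⟨m, rfl⟩ : ∃ m : ℕ, k = 2 * s - m := ⟨(2 * s - k).toNat, by lia⟩
  have index_zero : (2 * (s : ℤ) + 2 - (2 * s - m)).toNat = m + 2 := by lia
  have index_one : (2 * (s : ℤ) + 2 - (2 * s - m + 1)).toNat = m + 1 := by lia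
  have index_two : (2 * (s : ℤ) + 2 - (2 * s - m + 2)).toNat = m := by lia
  simp only [symRem, index_zero, index_one, index_two, symAux]

/-- The pair `(r_k, r_{k+1})` of consecutive remainders of the symmetric Euclidean scheme, as the
column vector on which the division steps act. -/
def remainderVec (k : ℤ) : Fin 2 → ℤ := ![symRem q s k, symRem q s (k + 1)]

/-- The quotients `[q_1, …, q_k]` as a list; only the values of `q` at `1, …, k` matter. -/
def quotientList (k : ℕ) : List ℤ := (List.range k).map fun i : ℕ ↦ q (i + 1)

theorem remainderVec_last : remainderVec q s (2 * s + 1) = ![1, 0] := by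
  have index_one : (2 * (s : ℤ) + 2 - (2 * s + 1)).toNat = 1 := by lia
  have index_zero : (2 * (s : ℤ) + 2 - (2 * s + 1 + 1)).toNat = 0 := by lia
  simp only [remainderVec, symRem, index_one, index_zero, symAux]

theorem remainderVec_eq_quotientMatrix_mulVec {k : ℤ} (hk : k ≤ 2 * s) :
    remainderVec q s k = quotientMatrix (symQuot q s k) *ᵥ remainderVec q s (k + 1) := by
  rw [remainderVec, remainderVec, quotientMatrix_mulVec, symRem_eq_symQuot_mul_add q s hk,
    add_assoc, one_add_one_eq_two]

theorem quotientList_succ (k : ℕ) : quotientList q (k + 1) = quotientList q k ++ [q (k + 1)] := by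
  simp [quotientList, List.range_succ]

theorem forall_mem_quotientList_iff {p : ℤ → Prop} :
    (∀ x ∈ quotientList q s, p x) ↔ ∀ k : ℤ, 1 ≤ k → k ≤ s → p (q k) := by
  simp only [quotientList, List.forall_mem_map, List.mem_range]
  refine ⟨fun h k hk hks ↦ ?_, fun h i hi ↦ h _ (by lia) (by lia)⟩
  have := h (k - 1).toNat (by lia)
  rwa [Int.toNat_of_nonneg (by lia), sub_add_cancel] at this

theorem exists_quotientList_eq (l : List ℤ) : ∃ q : ℤ → ℤ, quotientList q l.length = l := by
  refine ⟨fun k ↦ l.getD (k - 1).toNat 0, List.ext_getElem (by simp [quotientList]) ?_⟩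
  intro i _ hi
  simp [quotientList, hi]

theorem remainderVec_one_eq_quotientProduct_mulVec {k : ℕ} (hk : k ≤ s) :
    remainderVec q s 1 = quotientProduct (quotientList q k) *ᵥ remainderVec q s (k + 1) := by
  induction k with
  | zero => simp [quotientList, quotientProduct_nil]
  | succ k ih =>
    rw [ih (by lia), remainderVec_eq_quotientMatrix_mulVec q s (by lia),
      symQuot_of_le q s (by lia), quotientList_succ, quotientProduct_concat, Matrix.mulVec_mulVec,
      Nat.cast_succ]

theorem remainderVec_reflect {k : ℕ} (hk : k ≤ s) :
    remainderVec q s (2 * s + 1 - k) = (quotientProduct (quotientList q k))ᵀ *ᵥ ![1, 0] := by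
  induction k with
  | zero => simp [quotientList, quotientProduct_nil, remainderVec_last]
  | succ k ih =>
    have previous : 2 * (s : ℤ) + 1 - (k + 1 : ℕ) + 1 = 2 * s + 1 - k := by lia
    rw [remainderVec_eq_quotientMatrix_mulVec q s (by lia), symQuot_reflect q s (by lia), previous,
      ih (by lia), quotientList_succ, quotientProduct_concat, Matrix.transpose_mul,
      quotientMatrix_transpose, Matrix.mulVec_mulVec, Nat.cast_succ]

theorem remainderVec_one_eq_mul_transpose_mulVec :
    remainderVec q s 1 =
      (quotientProduct (quotientList q s) * (quotientProduct (quotientList q s))ᵀ) *ᵥ ![1, 0] := by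
  have middle : (s : ℤ) + 1 = 2 * s + 1 - s := by ring
  rw [remainderVec_one_eq_quotientProduct_mulVec q s le_rfl, middle,
    remainderVec_reflect q s le_rfl, Matrix.mulVec_mulVec]

theorem symRem_one_eq_mul_transpose_apply :
    symRem q s 1 =
      (quotientProduct (quotientList q s) * (quotientProduct (quotientList q s))ᵀ) 0 0 := by
  simpa [remainderVec, Matrix.mulVec, dotProduct] using
    congrFun (remainderVec_one_eq_mul_transpose_mulVec q s) 0

theorem symRem_two_eq_mul_transpose_apply :
    symRem q s 2 =
      (quotientProduct (quotientList q s) * (quotientProduct (quotientList q s))ᵀ) 1 0 := by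
  simpa [remainderVec, Matrix.mulVec, dotProduct] using
    congrFun (remainderVec_one_eq_mul_transpose_mulVec q s) 1

end SymmetricScheme

theorem sq_modEq_neg_one_of_isSymm_of_det_eq_one {A : Matrix (Fin 2) (Fin 2) ℤ} (hA : A.IsSymm)
    (hdet : A.det = 1) : A 1 0 ^ 2 ≡ -1 [ZMOD A 0 0] := by
  rw [Matrix.det_fin_two, hA.apply 1 0] at hdet
  refine (Int.modEq_iff_dvd.mpr ⟨A 1 1, ?_⟩).symm
  linear_combination -hdet

theorem pos_and_le_of_mul_eq_sq_add_one {n a m : ℤ} (ha : 0 < a) (han : a < n)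
    (h : n * m = a ^ 2 + 1) : 0 < m ∧ m ≤ a := by
  have hm : 0 < m := pos_of_mul_pos_right (h ▸ by positivity) (ha.trans han).le
  refine ⟨hm, ?_⟩
  by_contra! ham
  have : (a + 1) * (a + 1) ≤ n * m := by gcongr <;> lia
  linarith

theorem exists_quotientProduct_mul_transpose_eq {n a m : ℤ} (ha : 0 ≤ a) (han : a < n)
    (h : n * m = a ^ 2 + 1) :
    ∃ l : List ℤ, (∀ x ∈ l, 0 < x) ∧
      quotientProduct l * (quotientProduct l)ᵀ = !![n, a; a, m] := by
  obtain rfl | ha := ha.eq_or_lt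
  · have hnm : n * m = 1 := by simpa using h
    obtain rfl : n = 1 := Int.eq_one_of_mul_eq_one_right han.le hnm
    obtain rfl : m = 1 := by simpa using hnm
    refine ⟨[], by simp, ?_⟩
    rw [quotientProduct_nil, Matrix.transpose_one, mul_one, Matrix.one_fin_two]
  · obtain ⟨hm, hma⟩ := pos_and_le_of_mul_eq_sq_add_one ha han h
    have quotient_pos : 0 < a / m := (Int.le_ediv_iff_mul_le hm).mpr (by lia)
    have division : a / m * m + a % m = a := Int.ediv_mul_add_emod a m
    have reduced : m * (n - 2 * (a / m) * a + (a / m) ^ 2 * m) = (a % m) ^ 2 + 1 := by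
      linear_combination h + (a / m * m - a - a % m) * division
    have corner : (a / m) ^ 2 * m + 2 * (a / m) * (a % m) +
        (n - 2 * (a / m) * a + (a / m) ^ 2 * m) = n := by
      linear_combination 2 * (a / m) * division
    have remainder_lt : a % m < m := Int.emod_lt_of_pos a hm
    obtain ⟨l, hl, factorization⟩ :=
      exists_quotientProduct_mul_transpose_eq (Int.emod_nonneg a hm.ne') remainder_lt reduced
    refine ⟨a / m :: l, List.forall_mem_cons.mpr ⟨quotient_pos, hl⟩, ?_⟩
    rw [quotientProduct_cons_mul_transpose, factorization, quotientMatrix_mul_mul_transpose,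
      corner, division]
termination_by n.toNat

theorem perron_characterization
    (n a : ℤ) (ha : 0 < a) (han : a < n) (hcop : IsCoprime n a) :
    (∃ (s : ℕ) (q : ℤ → ℤ), 1 ≤ s ∧ (∀ k : ℤ, 1 ≤ k → k ≤ (s : ℤ) → 0 < q k) ∧
        symRem q s 1 = n ∧ symRem q s 2 = a) ↔
      a ^ 2 ≡ -1 [ZMOD n] := by
  constructor
  · rintro ⟨s, q, -, -, rfl, rfl⟩
    rw [symRem_one_eq_mul_transpose_apply, symRem_two_eq_mul_transpose_apply]
    exact sq_modEq_neg_one_of_isSymm_of_det_eq_one (Matrix.isSymm_mul_transpose_self _)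
      (det_quotientProduct_mul_transpose _)
  · intro h
    obtain ⟨m, hm⟩ := Int.modEq_iff_dvd.mp h.symm
    obtain ⟨l, l_pos, factorization⟩ :=
      exists_quotientProduct_mul_transpose_eq ha.le han (by linarith : n * m = a ^ 2 + 1)
    have l_ne_nil : l ≠ [] := by
      rintro rfl
      have := congrFun₂ factorization 1 0
      simp [quotientProduct_nil, ha.ne] at this
    obtain ⟨q, hq⟩ := exists_quotientList_eq l
    refine ⟨l.length, q, List.length_pos_of_ne_nil l_ne_nil, ?_, ?_, ?_⟩
    · rwa [← forall_mem_quotientList_iff, hq]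
    · rw [symRem_one_eq_mul_transpose_apply, hq, factorization]; rfl
    · rw [symRem_two_eq_mul_transpose_apply, hq, factorization]; rfl
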